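/- arXiv:2211.10781 — 2 statements merged into one kernel-verified Lean document; each statement's English description precedes it below -/
import Mathlib

section
/- Let A be a finitely generated commutative ring (i.e. finitely generated as a ℤ-algebra) whose underlying additive group has no torsion. Then the full group Aut(A) of ring automorphisms of A is virtually torsion free. -/
/-!
The proof is a congruence-subgroup argument.

For an ideal `J` with `A ⧸ J` finite, let `Γ(J)` be the group of automorphisms acting trivially on
`A ⧸ J ^ 2`. It has finite index: this quotient is finite and `A` is finitely generated, so there
are only finitely many ring homomorphisms `A → A ⧸ J ^ 2`. An element of `Γ(J)` acts trivially on
each `J ^ n / J ^ (n + 1)`, hence unipotently on `A ⧸ J ^ n`. If `p ∈ J` is prime, an element `σ`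
of `Γ(J)` of order prime to `p` is therefore trivial on every `A ⧸ J ^ n`, i.e. `σ x - x` lies in
`⋂ J ^ n` for all `x` (`sub_mem_pow_of_pow_eq_one`).

It remains to find enough ideals `J`. The ring `A` is Noetherian and has finitely many associated
primes `P`. By the absence of torsion each `A ⧸ P` has characteristic zero, so by the
Nullstellensatz over `ℤ` there are ideals `J₁, J₂ ⊇ P` of finite index containing different primes
`p` and `q` (`exists_two_ideals`). Krull's intersection theorem shows that an element lying, for
each `P`, in all powers of one of the two ideals is zero (`eq_zero_of_forall_mem_pow`). Let `H` be
the intersection of all the `Γ(J₁)` and `Γ(J₂)`. An element of `H` of prime order `r` is the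
identity, since for each `P` one of `p`, `q` differs from `r`.
-/

theorem isJacobsonRing_int : IsJacobsonRing ℤ := by
  rw [isJacobsonRing_iff_prime_eq]
  intro P hP
  by_cases h : P = ⊥
  · subst h
    refine le_antisymm (fun x hx => ?_) Ideal.le_jacobson
    rw [Ideal.mem_jacobson_bot] at hx
    have h3 := Int.isUnit_iff.1 (hx 3)
    have : x = 0 := by omega
    simp [this]
  · have := IsPrime.to_maximal_ideal h
    exact Ideal.jacobson_eq_self_of_isMaximal

theorem finiteType_int_of_surjective {A B : Type*} [CommRing A] [CommRing B]
    [Algebra.FiniteType ℤ A] (f : A →+* B) (hf : Function.Surjective f) :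
    Algebra.FiniteType ℤ B :=
  Algebra.FiniteType.of_surjective f.toIntAlgHom hf

/-- By Zariski's lemma over the Jacobson ring `ℤ`, a field that is finitely generated as a ring is
a finitely generated abelian group; since `ℤ` is not a field, it is also torsion. -/
theorem finite_of_finiteType_int (K : Type*) [Field K] [Algebra.FiniteType ℤ K] : Finite K := by
  have := isJacobsonRing_int
  have hfin : Module.Finite ℤ K := finite_of_finite_type_of_isJacobsonRing ℤ K
  have hni : ¬ Function.Injective (algebraMap ℤ K) := fun hinj =>
    Int.not_isField (isField_of_isIntegral_of_isField hinj (Field.toIsField K))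
  rw [injective_iff_map_eq_zero] at hni
  push Not at hni
  obtain ⟨n, hn, hn0⟩ := hni
  refine Module.finite_of_fg_torsion K ?_
  intro x
  refine ⟨⟨n, mem_nonZeroDivisors_of_ne_zero hn0⟩, ?_⟩
  change n • x = 0
  rw [Algebra.smul_def, hn, zero_mul]

theorem exists_maximal_finite_quotient (B : Type*) [CommRing B] [Nontrivial B] [Algebra.FiniteType ℤ B] :
    ∃ m : Ideal B, m.IsMaximal ∧ Finite (B ⧸ m) := by
  obtain ⟨m, hm⟩ := Ideal.exists_maximal B
  let := Ideal.Quotient.field m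
  have := finiteType_int_of_surjective (Ideal.Quotient.mk m) Ideal.Quotient.mk_surjective
  exact ⟨m, hm, finite_of_finiteType_int _⟩

/-- `J₁` is any maximal ideal, with residue characteristic `p`, and `J₂` is the preimage of a maximal
ideal of `B[1/p]`, whose residue characteristic `q` cannot be `p`. -/
theorem exists_two_ideals.{u} (B : Type u) [CommRing B] [IsDomain B] [CharZero B]
    [Algebra.FiniteType ℤ B] :
    ∃ (J₁ J₂ : Ideal B) (p q : ℕ), p.Prime ∧ q.Prime ∧ p ≠ q ∧
      J₁ ≠ ⊤ ∧ J₂ ≠ ⊤ ∧ Finite (B ⧸ J₁) ∧ Finite (B ⧸ J₂) ∧ (p : B) ∈ J₁ ∧ (q : B) ∈ J₂ := by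
  obtain ⟨m, hm, hf⟩ := exists_maximal_finite_quotient B
  let := Ideal.Quotient.field m
  obtain ⟨p, hp⟩ := CharP.exists (B ⧸ m)
  have hpp : p.Prime := (CharP.char_is_prime_or_zero (B ⧸ m) p).resolve_right
    (CharP.char_ne_zero_of_finite (B ⧸ m) _)
  have hpB : (p : B) ≠ 0 := by exact_mod_cast hpp.ne_zero
  obtain ⟨C, _, _, _⟩ : ∃ (C : Type u) (_ : CommRing C) (_ : Algebra B C),
      IsLocalization.Away (p : B) C := ⟨Localization.Away (p : B), _, _, inferInstance⟩
  have : Nontrivial C := (IsLocalization.injective C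
    (powers_le_nonZeroDivisors_of_noZeroDivisors hpB)).nontrivial
  have : Algebra.FiniteType B C := IsLocalization.finiteType_of_monoid_fg (Submonoid.powers (p : B)) C
  have : Algebra.FiniteType ℤ C := Algebra.FiniteType.trans (S := B) inferInstance inferInstance
  obtain ⟨n, hn, hfn⟩ := exists_maximal_finite_quotient C
  let := Ideal.Quotient.field n
  obtain ⟨q, hq⟩ := CharP.exists (C ⧸ n)
  have hqp : q.Prime := (CharP.char_is_prime_or_zero (C ⧸ n) q).resolve_right
    (CharP.char_ne_zero_of_finite (C ⧸ n) _)
  refine ⟨m, n.comap (algebraMap B C), p, q, hpp, hqp, ?_, hm.ne_top,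
    Ideal.comap_ne_top _ hn.ne_top, hf, ?_, ?_, ?_⟩
  · rintro rfl
    refine hn.ne_top (Ideal.eq_top_of_isUnit_mem _ (x := algebraMap B C p) ?_
      (IsLocalization.Away.algebraMap_isUnit (p : B)))
    rw [map_natCast, ← Ideal.Quotient.eq_zero_iff_mem, map_natCast, CharP.cast_eq_zero]
  · exact Finite.of_injective (Ideal.quotientMap n (algebraMap B C) le_rfl)
      Ideal.quotientMap_injective
  · rw [← Ideal.Quotient.eq_zero_iff_mem, map_natCast, CharP.cast_eq_zero]
  · rw [Ideal.mem_comap, map_natCast, ← Ideal.Quotient.eq_zero_iff_mem, map_natCast,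
      CharP.cast_eq_zero]

/-- The group of automorphisms of `A` that act trivially on `A ⧸ I`. -/
def congruenceSubgroup {A : Type*} [CommRing A] (I : Ideal A) : Subgroup (A ≃+* A) where
  carrier := {σ | ∀ x, σ x - x ∈ I}
  one_mem' x := by simp
  mul_mem' {σ τ} hσ hτ x := by
    have := I.add_mem (hσ (τ x)) (hτ x)
    simpa using this
  inv_mem' {σ} hσ x := by
    have := I.neg_mem (hσ (σ⁻¹ x))
    have h2 : σ (σ⁻¹ x) = x := σ.apply_symm_apply x
    rwa [h2, neg_sub] at this

theorem mem_congruenceSubgroup {A : Type*} [CommRing A] {I : Ideal A} {σ : A ≃+* A} :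
    σ ∈ congruenceSubgroup I ↔ ∀ x, σ x - x ∈ I := Iff.rfl

/-- A ring homomorphism out of `A` is determined by its values on a finite generating set, so
there are finitely many of them into `A ⧸ I`. -/
theorem finiteIndex_congruenceSubgroup {A : Type*} [CommRing A] (hfg : Algebra.FiniteType ℤ A)
    (I : Ideal A) [Finite (A ⧸ I)] : (congruenceSubgroup I).FiniteIndex := by
  obtain ⟨s, hs⟩ := hfg.out
  have hfin : Finite (A →+* A ⧸ I) := by
    refine Finite.of_injective (fun (f : A →+* A ⧸ I) (x : s) => f x) fun f g hfg => ?_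
    have : f.toIntAlgHom = g.toIntAlgHom :=
      AlgHom.ext_of_adjoin_eq_top hs fun x hx => congrFun hfg ⟨x, hx⟩
    ext x
    exact DFunLike.congr_fun this x
  -- Inverses appear because `G ⧸ H` consists of left cosets.
  let F : (A ≃+* A) → (A →+* A ⧸ I) := fun σ => (Ideal.Quotient.mk I).comp (σ⁻¹ : A ≃+* A)
  have hF : Finite ((A ≃+* A) ⧸ congruenceSubgroup I) := by
    refine Finite.of_injective (fun c => F c.out) fun c d hcd => ?_
    rw [← c.out_eq', ← d.out_eq']
    refine QuotientGroup.eq.2 fun x => ?_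
    rw [← Ideal.Quotient.eq]
    have h := DFunLike.congr_fun hcd (d.out x)
    have h2 : d.out⁻¹ (d.out x) = x := (d.out).symm_apply_apply x
    change Ideal.Quotient.mk I (c.out⁻¹ (d.out x)) = Ideal.Quotient.mk I (d.out⁻¹ (d.out x)) at h
    rwa [h2] at h
  exact Subgroup.finiteIndex_of_finite_quotient

/-- An automorphism that is trivial modulo `J ^ 2` is trivial on every graded piece
`J ^ n / J ^ (n + 1)`. -/
theorem sub_mem_pow_succ {A : Type*} [CommRing A] {J : Ideal A} {σ : A ≃+* A}
    (hσ : σ ∈ congruenceSubgroup (J ^ 2)) (n : ℕ) : ∀ y ∈ J ^ n, σ y - y ∈ J ^ (n + 1) := by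
  induction n with
  | zero => exact fun y _ => Ideal.pow_le_pow_right (by norm_num) (hσ y)
  | succ n ih =>
    intro y hy
    rw [pow_succ] at hy
    refine Submodule.mul_induction_on hy (fun a ha b hb => ?_) fun a b ha hb => ?_
    · have h1 := ih a ha
      have h2 : σ a ∈ J ^ n := by
        have := (J ^ n).add_mem (Ideal.pow_le_pow_right (Nat.le_succ n) h1) ha
        rwa [sub_add_cancel] at this
      have h3 : σ a * (σ b - b) ∈ J ^ (n + 1 + 1) := by
        rw [add_assoc, pow_add]
        exact Ideal.mul_mem_mul h2 (hσ b)
      have h4 : (σ a - a) * b ∈ J ^ (n + 1 + 1) := by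
        rw [pow_succ]
        exact Ideal.mul_mem_mul h1 hb
      have := (J ^ (n + 1 + 1)).add_mem h3 h4
      convert this using 1
      rw [map_mul]; ring
    · have := (J ^ (n + 1 + 1)).add_mem ha hb
      convert this using 1
      rw [map_add]; ring

/-- If `σ` has order prime to an integer `p ∈ J`, then `σ x - x` lies in every power of `J`:
modulo `J ^ (n + 1)` one has `σ ^ k x = x + k (σ x - x)` as soon as `σ x - x ∈ J ^ n`. -/
theorem sub_mem_pow_of_pow_eq_one {A : Type*} [CommRing A] {J : Ideal A} {σ : A ≃+* A}
    (hσ : σ ∈ congruenceSubgroup (J ^ 2)) {p m : ℕ} (hp : (p : A) ∈ J) (hpm : Nat.Coprime m p)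
    (hm : σ ^ m = 1) (n : ℕ) (x : A) : σ x - x ∈ J ^ n := by
  induction n with
  | zero => simp
  | succ n ih =>
    have key : ∀ k : ℕ, (σ ^ k) x - x - k * (σ x - x) ∈ J ^ (n + 1) := by
      intro k
      induction k with
      | zero => simp
      | succ k ihk =>
        have hd := sub_mem_pow_succ hσ n _ ih
        have he := Ideal.pow_le_pow_right (Nat.le_succ _) (sub_mem_pow_succ hσ (n + 1) _ ihk)
        have := (J ^ (n + 1)).add_mem ((J ^ (n + 1)).add_mem he ihk)
          ((J ^ (n + 1)).mul_mem_left (k : A) hd)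
        convert this using 1
        rw [pow_succ', RingAut.mul_apply]
        simp only [map_sub, map_mul, map_natCast]
        push_cast
        ring
    have h1 := key m
    rw [hm, RingAut.one_apply, sub_self, zero_sub] at h1
    have h1 := (J ^ (n + 1)).neg_mem h1
    rw [neg_neg] at h1
    have h2 : (p : A) * (σ x - x) ∈ J ^ (n + 1) := by
      rw [pow_succ']
      exact Ideal.mul_mem_mul hp ih
    obtain ⟨u, v, huv⟩ := Nat.isCoprime_iff_coprime.2 hpm
    have huv' : (u : A) * m + v * p = 1 := by exact_mod_cast congrArg (Int.cast : ℤ → A) huv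
    have := (J ^ (n + 1)).add_mem ((J ^ (n + 1)).mul_mem_left (u : A) h1)
      ((J ^ (n + 1)).mul_mem_left (v : A) h2)
    rwa [← mul_assoc, ← mul_assoc, ← add_mul, huv', one_mul] at this

/-- The version of Krull's intersection theorem needed here: an element lying in every power of
`J P`, with `J P` a proper ideal containing `P`, for each associated prime `P`, is zero. -/
theorem eq_zero_of_forall_mem_pow {A : Type*} [CommRing A] [IsNoetherianRing A] {x : A}
    (h : ∀ P ∈ associatedPrimes A A, ∃ J : Ideal A, P ≤ J ∧ J ≠ ⊤ ∧ ∀ n, x ∈ J ^ n) : x = 0 := by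
  by_contra hx
  obtain ⟨P, hP, hxP⟩ := exists_le_isAssociatedPrime_of_isNoetherianRing A x hx
  obtain ⟨J, hPJ, hJ, hxJ⟩ := h P hP
  obtain ⟨r, hr⟩ := (J.mem_iInf_smul_pow_eq_bot_iff x).1 (by simpa using hxJ)
  refine hJ ((Ideal.eq_top_iff_one J).2 ?_)
  have h1 : 1 - (r : A) ∈ J := by
    refine hPJ (hxP ?_)
    rw [Submodule.mem_colon_singleton, Submodule.mem_bot, sub_smul, one_smul, hr, sub_self]
  have := J.add_mem h1 r.2
  rwa [sub_add_cancel] at this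

theorem exists_two_ideals_of_associatedPrime {A : Type*} [CommRing A]
    (hfg : Algebra.FiniteType ℤ A)
    (htf : ∀ (a : A) (n : ℕ), 1 ≤ n → n • a = 0 → a = 0)
    (P : Ideal A) (hP : P ∈ associatedPrimes A A) :
    ∃ (J₁ J₂ : Ideal A) (p q : ℕ), p.Prime ∧ q.Prime ∧ p ≠ q ∧ P ≤ J₁ ∧ P ≤ J₂ ∧
      J₁ ≠ ⊤ ∧ J₂ ≠ ⊤ ∧ Finite (A ⧸ J₁) ∧ Finite (A ⧸ J₂) ∧ (p : A) ∈ J₁ ∧ (q : A) ∈ J₂ := by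
  have hPp : P.IsPrime := hP.1
  obtain ⟨y, hy⟩ := hP.2
  -- `P` is the radical of the annihilator of `y`, so an integer in `P` would make `y` torsion.
  have hn : ∀ n : ℕ, (n : A) ∈ P → n = 0 := by
    intro n hnP
    by_contra h0
    rw [hy] at hnP
    obtain ⟨k, hk⟩ := hnP
    rw [Submodule.mem_colon_singleton, Submodule.mem_bot, smul_eq_mul] at hk
    have hy0 : y = 0 := htf y (n ^ k) (Nat.one_le_iff_ne_zero.2 (pow_ne_zero k h0)) (by
      rw [nsmul_eq_mul]; push_cast; exact hk)
    apply hPp.ne_top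
    rw [hy, hy0, Ideal.radical_eq_top, Ideal.eq_top_iff_one, Submodule.mem_colon_singleton]
    simp
  have : CharZero (A ⧸ P) := charZero_of_inj_zero fun n hn0 => hn n <| by
    rwa [← Ideal.Quotient.eq_zero_iff_mem, map_natCast]
  have := finiteType_int_of_surjective (Ideal.Quotient.mk P) Ideal.Quotient.mk_surjective
  obtain ⟨J₁, J₂, p, q, hp, hq, hpq, h1, h2, hf1, hf2, hp1, hq2⟩ := exists_two_ideals (A ⧸ P)
  have hle : ∀ J : Ideal (A ⧸ P), P ≤ J.comap (Ideal.Quotient.mk P) := fun J x hx => by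
    rw [Ideal.mem_comap, Ideal.Quotient.eq_zero_iff_mem.2 hx]
    exact J.zero_mem
  have hfin : ∀ J : Ideal (A ⧸ P), Finite ((A ⧸ P) ⧸ J) →
      Finite (A ⧸ J.comap (Ideal.Quotient.mk P)) := fun J _ =>
    Finite.of_injective (Ideal.quotientMap J (Ideal.Quotient.mk P) le_rfl)
      Ideal.quotientMap_injective
  exact ⟨J₁.comap (Ideal.Quotient.mk P), J₂.comap (Ideal.Quotient.mk P), p, q, hp, hq, hpq,
    hle _, hle _, Ideal.comap_ne_top _ h1, Ideal.comap_ne_top _ h2, hfin _ hf1, hfin _ hf2,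
    by simpa using hp1, by simpa using hq2⟩

/-- Theorem 1(b): For a finitely generated commutative ring `A` without additive torsion,
the group of ring automorphisms of `A` is virtually torsion free. -/
theorem stmt_1 (A : Type*) [CommRing A] (hfg : Algebra.FiniteType ℤ A)
    (htf : ∀ (a : A) (n : ℕ), 1 ≤ n → n • a = 0 → a = 0) :
    ∃ H : Subgroup (A ≃+* A), H.index ≠ 0 ∧ ∀ h ∈ H, IsOfFinOrder h → h = 1 := by
  have hN : IsNoetherianRing A := Algebra.FiniteType.isNoetherianRing ℤ A
  have hfinP : Finite (associatedPrimes A A) := (associatedPrimes.finite A A).to_subtype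
  choose J₁ J₂ p q hp hq hpq hP1 hP2 h1 h2 hf1 hf2 hp1 hq2 using
    fun P : associatedPrimes A A => exists_two_ideals_of_associatedPrime hfg htf P.1 P.2
  have hidx : ∀ J : Ideal A, Finite (A ⧸ J) → (congruenceSubgroup (J ^ 2)).FiniteIndex := by
    intro J hJ
    have := Ideal.finite_quotient_pow (IsNoetherian.noetherian J) 2
    exact finiteIndex_congruenceSubgroup hfg _
  have hI1 := Subgroup.finiteIndex_iInf fun P => hidx (J₁ P) (hf1 P)
  have hI2 := Subgroup.finiteIndex_iInf fun P => hidx (J₂ P) (hf2 P)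
  refine ⟨(⨅ P, congruenceSubgroup (J₁ P ^ 2)) ⊓ ⨅ P, congruenceSubgroup (J₂ P ^ 2),
    Subgroup.FiniteIndex.index_ne_zero, ?_⟩
  intro h hh hfo
  by_contra hne
  -- It suffices to treat the power `g` of `h` of prime order `r`.
  obtain ⟨r, hr, hrd⟩ := Nat.exists_prime_and_dvd (mt orderOf_eq_one_iff.1 hne)
  let g := h ^ (orderOf h / r)
  have hg : orderOf g = r := orderOf_pow_orderOf_div hfo.orderOf_pos.ne' hrd
  have hgH := Subgroup.pow_mem _ hh (orderOf h / r)
  have hgr : g ^ r = 1 := hg ▸ pow_orderOf_eq_one g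
  have hg1 : g = 1 := by
    refine RingEquiv.ext fun x => sub_eq_zero.1 (eq_zero_of_forall_mem_pow fun P hP => ?_)
    -- At least one of the two residue characteristics chosen for `P` differs from `r`.
    by_cases hrp : r = p ⟨P, hP⟩
    · refine ⟨J₂ ⟨P, hP⟩, hP2 ⟨P, hP⟩, h2 ⟨P, hP⟩, fun n => ?_⟩
      refine sub_mem_pow_of_pow_eq_one (Subgroup.mem_iInf.1 hgH.2 _) (hq2 _) ?_ hgr n x
      exact (Nat.coprime_primes hr (hq _)).2 (hrp ▸ hpq _)
    · refine ⟨J₁ ⟨P, hP⟩, hP1 ⟨P, hP⟩, h1 ⟨P, hP⟩, fun n => ?_⟩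
      refine sub_mem_pow_of_pow_eq_one (Subgroup.mem_iInf.1 hgH.1 _) (hp1 _) ?_ hgr n x
      exact (Nat.coprime_primes hr (hp _)).2 hrp
  rw [hg1, orderOf_one] at hg
  exact hr.one_lt.ne hg
end

section
/- Let Φ be a commutative ring with 1 and let A be a finitely generated commutative Φ-algebra whose underlying additive group has no torsion. Then every torsion subgroup of the group Aut_Φ(A) of Φ-algebra automorphisms of A is locally finite. -/
theorem finite_quotient_maximal {B : Type*} [CommRing B] [Algebra.FiniteType ℤ B]
    (m : Ideal B) [hm : m.IsMaximal] : Finite (B ⧸ m) := by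
  have := isJacobsonRing_int
  let _ : Field (B ⧸ m) := Ideal.Quotient.field m
  have hft : Algebra.FiniteType ℤ (B ⧸ m) :=
    Algebra.FiniteType.of_surjective (Ideal.Quotient.mkₐ ℤ m) (Ideal.Quotient.mkₐ_surjective ℤ m)
  have hfin : Module.Finite ℤ (B ⧸ m) := finite_of_finite_type_of_isJacobsonRing ℤ (B ⧸ m)
  obtain ⟨p, hp⟩ := CharP.exists (B ⧸ m)
  have hp0 : p ≠ 0 := by
    rintro rfl
    have := CharP.charP_to_charZero (B ⧸ m)
    exact Int.not_isField (isField_of_isIntegral_of_isField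
      (FaithfulSMul.algebraMap_injective ℤ (B ⧸ m)) (Field.toIsField (B ⧸ m)))
  apply Module.finite_of_fg_torsion
  intro x
  refine ⟨⟨(p : ℤ), mem_nonZeroDivisors_of_ne_zero (by exact_mod_cast hp0)⟩, ?_⟩
  change (p : ℤ) • x = 0
  simp [zsmul_eq_mul]

theorem exists_maximal_not_mem {B : Type*} [CommRing B] [IsJacobsonRing B]
    (P : Ideal B) [hP : P.IsPrime] (x : B) (hx : x ∉ P) :
    ∃ m : Ideal B, m.IsMaximal ∧ P ≤ m ∧ x ∉ m := by
  rw [← isJacobsonRing_iff_prime_eq.mp ‹_› P hP, Ideal.jacobson, Ideal.mem_sInf] at hx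
  push Not at hx
  obtain ⟨m, ⟨h1, h2⟩, h3⟩ := hx
  exact ⟨m, h2, h1, h3⟩

/-- Two maximal ideals of distinct residue characteristics lie above a prime ideal containing no
positive integer. -/
theorem exists_two_maximal {B : Type*} [CommRing B] [Algebra.FiniteType ℤ B]
    (P : Ideal B) [hP : P.IsPrime] (hPn : ∀ n : ℕ, 1 ≤ n → (n : B) ∉ P) :
    ∃ m m' : Ideal B, (m.IsMaximal ∧ P ≤ m) ∧ (m'.IsMaximal ∧ P ≤ m') ∧
      ∀ q : ℕ, q.Prime → (q : B) ∉ m ∨ (q : B) ∉ m' := by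
  have := isJacobsonRing_int
  have : IsJacobsonRing B := isJacobsonRing_of_finiteType (A := ℤ)
  obtain ⟨m, hm, hPm⟩ := Ideal.exists_le_maximal P hP.ne_top
  have hfin := finite_quotient_maximal m
  let _ : Field (B ⧸ m) := Ideal.Quotient.field m
  obtain ⟨p, hp⟩ := CharP.exists (B ⧸ m)
  have hpp : p.Prime := CharP.char_is_prime (B ⧸ m) p
  obtain ⟨m', hm', hPm', hpm'⟩ := exists_maximal_not_mem P (p : B) (hPn p hpp.one_le)
  refine ⟨m, m', ⟨hm, hPm⟩, ⟨hm', hPm'⟩, fun q hq => ?_⟩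
  by_contra! h
  have h0 : ((q : ℕ) : B ⧸ m) = 0 := by
    rw [← map_natCast (Ideal.Quotient.mk m)]
    exact Ideal.Quotient.eq_zero_iff_mem.mpr h.1
  rw [CharP.cast_eq_zero_iff (B ⧸ m) p, Nat.prime_dvd_prime_iff_eq hpp hq] at h0
  subst h0
  exact hpm' h.2

theorem finite_ringHom {B C : Type*} [CommRing B] [CommRing C] [hft : Algebra.FiniteType ℤ B]
    [Finite C] : Finite (B →+* C) := by
  obtain ⟨s, hs⟩ := hft.out
  refine Finite.of_injective (fun (f : B →+* C) (x : s) => f x) fun f g hfg => ?_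
  have : f.toIntAlgHom = g.toIntAlgHom :=
    AlgHom.ext_of_adjoin_eq_top hs fun x hx => congrFun hfg ⟨x, hx⟩
  ext x
  exact DFunLike.congr_fun this x

/-! ### Automorphisms acting trivially modulo the square of a maximal ideal -/

/-- If `g - 1` maps `B` into `m ^ k` with `2 ≤ k`, then it maps `m ^ 2` into `m ^ (k + 1)`. -/
theorem sub_mem_pow_succ_s2 {B : Type*} [CommRing B] (m : Ideal B) (g : B →+* B) (k : ℕ)
    (hk : 2 ≤ k) (h : ∀ a, g a - a ∈ m ^ k) (a : B) (ha : a ∈ m ^ 2) :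
    g a - a ∈ m ^ (k + 1) := by
  rw [pow_two] at ha
  induction ha using Submodule.mul_induction_on' with
  | mem_mul_mem x hx y hy =>
    have hgy : g y ∈ m := by
      have h1 : g y - y ∈ m := Ideal.pow_le_self (by omega) (h y)
      simpa using m.add_mem h1 hy
    have e : g (x * y) - x * y = (g x - x) * g y + (g y - y) * x := by
      rw [map_mul]; ring
    rw [e, pow_succ]
    exact add_mem (Ideal.mul_mem_mul (h x) hgy) (Ideal.mul_mem_mul (h y) hx)
  | add x _ y _ hx hy =>
    have e : g (x + y) - (x + y) = (g x - x) + (g y - y) := by rw [map_add]; ring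
    rw [e]
    exact add_mem hx hy

/-- The expansion `g ^ n ≡ 1 + n (g - 1)` modulo `m ^ (k + 1)`. -/
theorem iterate_sub_mem {B : Type*} [CommRing B] (m : Ideal B) (g : B →+* B) (k : ℕ)
    (hk : 2 ≤ k) (h : ∀ a, g a - a ∈ m ^ k) (a : B) (n : ℕ) :
    g^[n] a - a - n * (g a - a) ∈ m ^ (k + 1) := by
  induction n with
  | zero => simp
  | succ n ih =>
    have h2 : g^[n] a - a ∈ m ^ k := by
      have := add_mem (Ideal.pow_le_pow_right (Nat.le_succ k) ih)
        (Ideal.mul_mem_left (m ^ k) (n : B) (h a))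
      simpa using this
    have h3 := sub_mem_pow_succ_s2 m g k hk h _ (Ideal.pow_le_pow_right hk h2)
    have := add_mem ih h3
    convert this using 1
    rw [Function.iterate_succ_apply', map_sub]
    push_cast
    ring

theorem mem_pow_of_mul_mem_pow {B : Type*} [CommRing B] (m : Ideal B) [hm : m.IsMaximal] (k : ℕ)
    (q b : B) (hq : q ∉ m) (h : q * b ∈ m ^ k) : b ∈ m ^ k := by
  obtain ⟨c, i, hi, hc⟩ := hm.exists_inv hq
  have hcop : IsCoprime q (i ^ k) := by
    apply IsCoprime.pow_right
    exact ⟨c, 1, by rw [one_mul]; exact hc⟩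
  obtain ⟨u, v, huv⟩ := hcop
  have : b = u * (q * b) + (v * b) * i ^ k := by linear_combination (-b) * huv
  rw [this]
  exact add_mem (Ideal.mul_mem_left _ _ h) (Ideal.mul_mem_left _ _ (Ideal.pow_mem_pow hi k))

/-- An automorphism of `B` whose order is invertible modulo `m` and which is trivial on `B ⧸ m ^ 2`
is trivial on every `B ⧸ m ^ k`. -/
theorem sub_mem_pow {B : Type*} [CommRing B] (m : Ideal B) [hm : m.IsMaximal] (g : B →+* B)
    (q : ℕ) (hq : (q : B) ∉ m) (hgq : ∀ a, g^[q] a = a) (h : ∀ a, g a - a ∈ m ^ 2) (k : ℕ)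
    (a : B) : g a - a ∈ m ^ k := by
  suffices H : ∀ k, 2 ≤ k → ∀ a, g a - a ∈ m ^ k from
    Ideal.pow_le_pow_right (Nat.le_add_right k 2) (H (k + 2) (by omega) a)
  intro k hk
  induction k, hk using Nat.le_induction with
  | base => exact h
  | succ k hk ih =>
    intro a
    apply mem_pow_of_mul_mem_pow m (k + 1) (q : B) _ hq
    have := iterate_sub_mem m g k hk ih a q
    rw [hgq] at this
    simpa using this

/-- If `P` contains the annihilator of `b ≠ 0`, then `b` does not lie in all powers of a proper
ideal above `P`. -/
theorem false_of_mem_pow {B : Type*} [CommRing B] [IsNoetherianRing B] (m P : Ideal B)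
    (hm : m ≠ ⊤) (hPm : P ≤ m) (b : B) (hP : ∀ r, r * b = 0 → r ∈ P)
    (hb : ∀ k, b ∈ m ^ k) : False := by
  obtain ⟨r, hr⟩ := (m.mem_iInf_smul_pow_eq_bot_iff b).mp (by
    simp only [Submodule.mem_iInf, smul_eq_mul, Ideal.mul_top]
    exact hb)
  have h1 : (1 - (r : B)) ∈ m := hPm (hP _ (by
    rw [smul_eq_mul] at hr
    rw [sub_mul, hr, one_mul, sub_self]))
  apply hm
  rw [Ideal.eq_top_iff_one]
  simpa using add_mem h1 r.2

/-! ### Torsion groups acting on rings of finite type over the integers -/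

theorem finite_of_torsion_action (B H : Type*) [CommRing B] [Algebra.FiniteType ℤ B]
    (htf : ∀ (a : B) (n : ℕ), 1 ≤ n → n • a = 0 → a = 0)
    [Group H] [MulSemiringAction H B] [FaithfulSMul H B] (htor : ∀ h : H, IsOfFinOrder h) :
    Finite H := by
  have : IsNoetherianRing B := Algebra.FiniteType.isNoetherianRing ℤ B
  have hex : ∀ P : associatedPrimes B B, ∃ m m' : Ideal B, (m.IsMaximal ∧ P.1 ≤ m) ∧
      (m'.IsMaximal ∧ P.1 ≤ m') ∧ ∀ q : ℕ, q.Prime → (q : B) ∉ m ∨ (q : B) ∉ m' := by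
    rintro ⟨P, hP⟩
    have := IsAssociatedPrime.isPrime hP
    refine exists_two_maximal P fun n hn hnP => ?_
    have hz : (n : B) ∈ ⋃ p ∈ associatedPrimes B B, (p : Set B) :=
      Set.mem_iUnion₂_of_mem hP hnP
    rw [biUnion_associatedPrimes_eq_zero_divisors] at hz
    obtain ⟨x, hx0, hx⟩ := hz
    exact hx0 (htf x n hn (by rw [nsmul_eq_mul]; exact hx))
  choose m m' hm hm' hmm' using hex
  have hfin : Finite (associatedPrimes B B) := (associatedPrimes.finite B B).to_subtype
  have hq : ∀ I : Ideal B, I.IsMaximal → Finite (B →+* B ⧸ I ^ 2) := by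
    intro I hI
    have := finite_quotient_maximal I
    have := Ideal.finite_quotient_pow (IsNoetherian.noetherian I) 2
    exact finite_ringHom
  have h1 : ∀ P, Finite (B →+* B ⧸ m P ^ 2) := fun P => hq _ (hm P).1
  have h2 : ∀ P, Finite (B →+* B ⧸ m' P ^ 2) := fun P => hq _ (hm' P).1
  -- The subgroup acting trivially on all the finite rings `B ⧸ m ^ 2` is trivial.
  have key : ∀ h : H, (∀ P a, h • a - a ∈ m P ^ 2) → (∀ P a, h • a - a ∈ m' P ^ 2) → h = 1 := by
    intro h hhm hhm'
    by_contra hne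
    have hpos := (htor h).orderOf_pos
    have hone : orderOf h ≠ 1 := by rwa [Ne, orderOf_eq_one_iff]
    set q := (orderOf h).minFac with hqdef
    have hqp : q.Prime := Nat.minFac_prime hone
    obtain ⟨d, hd⟩ := Nat.minFac_dvd (orderOf h)
    rw [← hqdef] at hd
    have hpow : ∀ (I : Ideal B), (∀ a : B, h • a - a ∈ I) → ∀ (n : ℕ) (a : B),
        h ^ n • a - a ∈ I := by
      intro I hI n
      induction n with
      | zero => simp
      | succ n ih =>
        intro a
        have := I.add_mem (ih (h • a)) (hI a)
        rw [pow_succ, mul_smul]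
        simpa using this
    set g := h ^ d with hg
    have hgne : g ≠ 1 := by
      intro h1
      have hdvd := orderOf_dvd_of_pow_eq_one h1
      have hd0 : 0 < d := by
        rcases Nat.eq_zero_or_pos d with h0 | h0
        · rw [h0] at hd; omega
        · exact h0
      have hle := Nat.le_of_dvd hd0 hdvd
      nlinarith [hqp.two_le]
    have hgq : g ^ q = 1 := by
      rw [hg, ← pow_mul, mul_comm, ← hd, pow_orderOf_eq_one]
    have hiter : ∀ a : B, (MulSemiringAction.toRingHom H B g)^[q] a = a := by
      intro a
      have : ∀ n : ℕ, (MulSemiringAction.toRingHom H B g)^[n] a = g ^ n • a := by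
        intro n
        induction n with
        | zero => simp
        | succ n ih => rw [Function.iterate_succ_apply', ih, pow_succ', mul_smul]; rfl
      rw [this, hgq, one_smul]
    obtain ⟨a, ha⟩ : ∃ a : B, g • a ≠ a := by
      by_contra! hall
      exact hgne (FaithfulSMul.eq_of_smul_eq_smul (α := B) fun a => by rw [hall, one_smul])
    obtain ⟨P, hP, hPa⟩ := exists_le_isAssociatedPrime_of_isNoetherianRing B (g • a - a)
      (sub_ne_zero.mpr ha)
    have hann : ∀ r : B, r * (g • a - a) = 0 → r ∈ P := fun r hr => hPa (by
      rw [Submodule.mem_colon_singleton]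
      simpa using hr)
    rcases hmm' ⟨P, hP⟩ q hqp with hqm | hqm
    · have := (hm ⟨P, hP⟩).1
      exact false_of_mem_pow _ P this.ne_top (hm ⟨P, hP⟩).2 _ hann fun k =>
        sub_mem_pow _ (MulSemiringAction.toRingHom H B g) q hqm hiter
          (hpow _ (hhm ⟨P, hP⟩) d) k a
    · have := (hm' ⟨P, hP⟩).1
      exact false_of_mem_pow _ P this.ne_top (hm' ⟨P, hP⟩).2 _ hann fun k =>
        sub_mem_pow _ (MulSemiringAction.toRingHom H B g) q hqm hiter
          (hpow _ (hhm' ⟨P, hP⟩) d) k a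
  refine Finite.of_injective (β := (∀ P, B →+* B ⧸ m P ^ 2) × (∀ P, B →+* B ⧸ m' P ^ 2))
    (fun h => (fun P => (Ideal.Quotient.mk _).comp (MulSemiringAction.toRingHom H B h),
      fun P => (Ideal.Quotient.mk _).comp (MulSemiringAction.toRingHom H B h))) ?_
  intro h₁ h₂ heq
  rw [Prod.mk.injEq] at heq
  rw [← mul_inv_eq_one]
  apply key
  · intro P a
    have := DFunLike.congr_fun (congrFun heq.1 P) (h₂⁻¹ • a)
    have := Ideal.Quotient.eq.mp this
    simpa [mul_smul] using this
  · intro P a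
    have := DFunLike.congr_fun (congrFun heq.2 P) (h₂⁻¹ • a)
    have := Ideal.Quotient.eq.mp this
    simpa [mul_smul] using this

/-! ### Reduction to rings of finite type over the integers -/

theorem exists_finite_coeffs {Φ A : Type*} [CommRing Φ] [CommRing A] [Algebra Φ A] (s : Set A)
    (x : A) (hx : x ∈ Algebra.adjoin Φ s) :
    ∃ C : Set Φ, C.Finite ∧ x ∈ Algebra.adjoin ℤ (s ∪ algebraMap Φ A '' C) := by
  have mono : ∀ C D : Set Φ, C ⊆ D → Algebra.adjoin ℤ (s ∪ algebraMap Φ A '' C) ≤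
      Algebra.adjoin ℤ (s ∪ algebraMap Φ A '' D) := fun C D h =>
    Algebra.adjoin_mono (Set.union_subset_union_right _ (Set.image_mono h))
  induction hx using Algebra.adjoin_induction with
  | mem x hx => exact ⟨∅, Set.finite_empty, Algebra.subset_adjoin (Or.inl hx)⟩
  | algebraMap r =>
    exact ⟨{r}, Set.finite_singleton r, Algebra.subset_adjoin (Or.inr ⟨r, rfl, rfl⟩)⟩
  | add x y _ _ hx hy =>
    obtain ⟨C, hC, hx⟩ := hx
    obtain ⟨D, hD, hy⟩ := hy
    exact ⟨C ∪ D, hC.union hD, add_mem (mono _ _ Set.subset_union_left hx)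
      (mono _ _ Set.subset_union_right hy)⟩
  | mul x y _ _ hx hy =>
    obtain ⟨C, hC, hx⟩ := hx
    obtain ⟨D, hD, hy⟩ := hy
    exact ⟨C ∪ D, hC.union hD, mul_mem (mono _ _ Set.subset_union_left hx)
      (mono _ _ Set.subset_union_right hy)⟩

/-- A finitely generated group of `Φ`-automorphisms of `A = Φ[s]` stabilises a subring of `A` which
contains `s` and is finitely generated over `ℤ`. -/
theorem exists_stable_subalgebra {Φ A : Type*} [CommRing Φ] [CommRing A] [Algebra Φ A] (s : Set A)
    (hs : s.Finite) (hgen : Algebra.adjoin Φ s = ⊤) (H : Subgroup (A ≃ₐ[Φ] A)) (hH : H.FG) :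
    ∃ A₀ : Subalgebra ℤ A, A₀.FG ∧ s ⊆ A₀ ∧ ∀ h ∈ H, ∀ x ∈ A₀, h x ∈ A₀ := by
  obtain ⟨T, hT⟩ := hH
  choose C hC hCx using fun x : A =>
    exists_finite_coeffs (Φ := Φ) s x (by rw [hgen]; trivial)
  set U : Set A := Set.image2 (fun (h : A ≃ₐ[Φ] A) x => h x) (T : Set (A ≃ₐ[Φ] A)) s ∪
    Set.image2 (fun (h : A ≃ₐ[Φ] A) x => h⁻¹ x) (T : Set (A ≃ₐ[Φ] A)) s with hU
  have hUfin : U.Finite :=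
    (Set.Finite.image2 _ T.finite_toSet hs).union (Set.Finite.image2 _ T.finite_toSet hs)
  set D : Set Φ := ⋃ x ∈ U, C x with hD
  have hDfin : D.Finite := hUfin.biUnion fun x _ => hC x
  set A₀ := Algebra.adjoin ℤ (s ∪ algebraMap Φ A '' D) with hA₀
  have hUA : ∀ x ∈ U, x ∈ A₀ := fun x hx =>
    Algebra.adjoin_mono (Set.union_subset_union_right _
      (Set.image_mono (Set.subset_biUnion_of_mem hx))) (hCx x)
  have hstab : ∀ h : A ≃ₐ[Φ] A, (∀ x ∈ s, h x ∈ A₀) → ∀ x ∈ A₀, h x ∈ A₀ := by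
    intro h hhs x hx
    induction hx using Algebra.adjoin_induction with
    | mem x hx =>
      rcases hx with hx | ⟨r, hr, rfl⟩
      · exact hhs x hx
      · rw [AlgEquiv.commutes]
        exact Algebra.subset_adjoin (Or.inr ⟨r, hr, rfl⟩)
    | algebraMap r => simp
    | add x y _ _ hx hy => rw [map_add]; exact add_mem hx hy
    | mul x y _ _ hx hy => rw [map_mul]; exact mul_mem hx hy
  refine ⟨A₀, Subalgebra.fg_def.mpr ⟨_, hs.union (hDfin.image _), rfl⟩,
    fun x hx => Algebra.subset_adjoin (Or.inl hx), fun h hh => ?_⟩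
  -- Stability under `h⁻¹` is carried along, since it does not follow from stability under `h`.
  suffices (∀ x ∈ A₀, h x ∈ A₀) ∧ ∀ x ∈ A₀, h⁻¹ x ∈ A₀ from this.1
  rw [← hT] at hh
  induction hh using Subgroup.closure_induction with
  | mem h hh =>
    exact ⟨hstab _ fun x hx => hUA _ (Or.inl ⟨h, hh, x, hx, rfl⟩),
      hstab _ fun x hx => hUA _ (Or.inr ⟨h, hh, x, hx, rfl⟩)⟩
  | one => simp
  | mul g h _ _ hg hh =>
    refine ⟨fun x hx => hg.1 _ (hh.1 x hx), fun x hx => ?_⟩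
    rw [mul_inv_rev]
    exact hh.2 _ (hg.2 x hx)
  | inv h _ hh => exact ⟨hh.2, by rw [inv_inv]; exact hh.1⟩

/-- Corollary 1: For a finitely generated commutative `Φ`-algebra `A` without additive
torsion, every torsion subgroup of `Aut_Φ(A)` is locally finite. -/
theorem stmt_2 (Φ A : Type*) [CommRing Φ] [CommRing A] [Algebra Φ A]
    (hfg : Algebra.FiniteType Φ A)
    (htf : ∀ (a : A) (n : ℕ), 1 ≤ n → n • a = 0 → a = 0)
    (G : Subgroup (A ≃ₐ[Φ] A)) (hG : ∀ g ∈ G, IsOfFinOrder g)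
    (H : Subgroup (A ≃ₐ[Φ] A)) (hHG : H ≤ G) (hH : H.FG) :
    Finite H := by
  obtain ⟨s, hs⟩ := hfg.out
  obtain ⟨A₀, hfg₀, hsA, hstab⟩ := exists_stable_subalgebra (s : Set A) s.finite_toSet hs H hH
  have : Algebra.FiniteType ℤ A₀ := A₀.fg_iff_finiteType.mp hfg₀
  let _ : MulSemiringAction H A₀ :=
    { smul := fun h x => ⟨h.1 x.1, hstab h.1 h.2 x.1 x.2⟩
      one_smul := fun x => rfl
      mul_smul := fun g h x => rfl
      smul_zero := fun h => Subtype.ext (map_zero h.1)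
      smul_add := fun h x y => Subtype.ext (map_add h.1 x.1 y.1)
      smul_one := fun h => Subtype.ext (map_one h.1)
      smul_mul := fun h x y => Subtype.ext (map_mul h.1 x.1 y.1) }
  have : FaithfulSMul H A₀ := by
    refine ⟨fun {g h} hgh => Subtype.ext ?_⟩
    have : (g.1 : A →ₐ[Φ] A) = (h.1 : A →ₐ[Φ] A) :=
      AlgHom.ext_of_adjoin_eq_top hs fun x hx => congrArg Subtype.val (hgh ⟨x, hsA hx⟩)
    exact AlgEquiv.ext fun x => DFunLike.congr_fun this x
  refine finite_of_torsion_action A₀ H (fun a n hn ha => Subtype.ext (htf a.1 n hn ?_)) fun h => ?_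
  · exact congrArg Subtype.val ha
  · exact Submonoid.isOfFinOrder_coe.mp (hG h.1 (hHG h.2))
end
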